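/- arXiv:1302.5789 — 2 statements merged into one kernel-verified Lean document; each statement's English description precedes it below -/
import Mathlib

section
/- If ℋ ⊆ ℋ' are finite-dimensional real Hilbert spaces, Ω and Ω' are their spaces of half-spaces with invariant measures μ and μ', then the pushforward ν of μ' along M' ↦ M' ∩ ℋ (restricted to half-spaces meeting ℋ in a half-space) is invariant under rigid motions of ℋ and satisfies ν{M : v ∈ M, w ∉ M} = ‖v − w‖ for v,w ∈ ℋ; consequently ν = μ. -/
open MeasureTheory
open scoped RealInnerProductSpace ENNReal

/-- The space of (closed affine) half-spaces of a real inner product space. -/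
def HalfSpaces (H : Type*) [NormedAddCommGroup H] [InnerProductSpace ℝ H] : Type _ :=
  {M : Set H // ∃ (ξ : H) (t : ℝ), ‖ξ‖ = 1 ∧ M = {u | t ≤ ⟪u, ξ⟫}}

/-- `μ` is the natural measure on the space of half-spaces: the σ-algebra is generated by
the sets `S_v = {M : v ∈ M}`, `μ` is invariant under rigid motions, and it is normalized
so that `μ {M : v ∈ M, w ∉ M} = ‖v - w‖`. -/
def IsHalfSpaceMeasure (H : Type*) [NormedAddCommGroup H] [InnerProductSpace ℝ H]
    [m : MeasurableSpace (HalfSpaces H)] (μ : Measure (HalfSpaces H)) : Prop :=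
  m = MeasurableSpace.generateFrom {A | ∃ v : H, A = {M : HalfSpaces H | v ∈ M.1}} ∧
  (∀ (φ : H ≃ᵢ H) (A : Set (HalfSpaces H)), MeasurableSet A →
    μ {M : HalfSpaces H | ⇑φ '' M.1 ∈ Subtype.val '' A} = μ A) ∧
  (∀ v w : H, μ {M : HalfSpaces H | v ∈ M.1 ∧ w ∉ M.1} = ENNReal.ofReal ‖v - w‖)

/-!
Describe a half-space by its unit inner normal `ξ` and its offset `t`. Invariance under rotations
and Fubini, applied to radial characteristic functions, show that any two rotation-invariant
measures on the unit sphere are proportional; hence an invariant measure on the pairs `(ξ, t)` is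
a product of a rotation-invariant probability measure and a measure `ρ` on the line. Translation by
`v` is the shear `(ξ, t) ↦ (ξ, t + ⟪v, ξ⟫)`, so `ρ` is invariant under almost all of these shifts;
the translations fixing `ρ` form a group, so `ρ` is a multiple of Lebesgue measure, and the
normalization fixes the constant. This makes the invariant measure on half-spaces unique.

The pushforward is again such a measure: rigid motions of `ℋ` extend to `ℋ'`, and a half-space of
`ℋ'` that separates two points of `ℋ` automatically meets `ℋ` in a half-space.
-/

open Set Filter Topology

section Translation

/-- The group of translations that preserve `ρ`. -/
def translationStabilizer {G : Type*} [AddGroup G] [MeasurableSpace G] [MeasurableAdd G]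
    (ρ : Measure G) : AddSubgroup G where
  carrier := {x | ρ.map (· + x) = ρ}
  zero_mem' := by simp
  add_mem' {x y} hx hy := by
    have hxy : (· + (x + y) : G → G) = (· + y) ∘ (· + x) := by
      ext t
      simp [add_assoc]
    rw [mem_ofPred_eq, hxy, ← Measure.map_map (measurable_add_const y) (measurable_add_const x),
      hx, hy]
  neg_mem' {x} hx := by
    have hid : (· + -x : G → G) ∘ (· + x) = id := by
      ext t
      simp
    rw [mem_ofPred_eq]
    conv_lhs => rw [← show ρ.map (· + x) = ρ from hx]
    rw [Measure.map_map (measurable_add_const _) (measurable_add_const x), hid, Measure.map_id]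

theorem mem_translationStabilizer {G : Type*} [AddGroup G] [MeasurableSpace G] [MeasurableAdd G]
    {ρ : Measure G} {x : G} : x ∈ translationStabilizer ρ ↔ ρ.map (· + x) = ρ :=
  Iff.rfl

theorem mem_translationStabilizer_iff_Ioo_rat {ρ : Measure ℝ} [IsLocallyFiniteMeasure ρ] {x : ℝ} :
    x ∈ translationStabilizer ρ ↔
      ∀ a b : ℚ, ρ ((· + x) ⁻¹' Ioo (a : ℝ) b) = ρ (Ioo (a : ℝ) b) := by
  simp only [mem_translationStabilizer, ← Measure.map_apply (measurable_add_const x)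
    measurableSet_Ioo]
  exact ⟨fun h a b => by rw [h],
    fun h => (Real.measure_ext_Ioo_rat fun a b => (h a b).symm).symm⟩

theorem measurable_measure_preimage_add_const {G : Type*} [AddGroup G] [MeasurableSpace G]
    [MeasurableAdd₂ G] (ρ : Measure G) [SFinite ρ] {B : Set G} (hB : MeasurableSet B) :
    Measurable fun x => ρ ((· + x) ⁻¹' B) :=
  measurable_measure_prodMk_left ((measurable_snd.add measurable_fst) hB)

theorem measurableSet_translationStabilizer (ρ : Measure ℝ) [IsLocallyFiniteMeasure ρ] :
    MeasurableSet (translationStabilizer ρ : Set ℝ) := by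
  have hT : (translationStabilizer ρ : Set ℝ) = ⋂ (a : ℚ) (b : ℚ),
      {x | ρ ((· + x) ⁻¹' Ioo (a : ℝ) b) = ρ (Ioo (a : ℝ) b)} := by
    ext x
    simp only [SetLike.mem_coe, mem_translationStabilizer_iff_Ioo_rat, mem_iInter, mem_ofPred_eq]
  rw [hT]
  exact .iInter fun a => .iInter fun b => measurableSet_eq_fun
    (measurable_measure_preimage_add_const ρ measurableSet_Ioo) measurable_const

theorem ae_mem_translationStabilizer_of_map_shear {X : Type*} [MeasurableSpace X] {σ : Measure X}
    [SigmaFinite σ] {ρ : Measure ℝ} [IsLocallyFiniteMeasure ρ] {f : X → ℝ} (hf : Measurable f)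
    (h : (σ.prod ρ).map (fun p => (p.1, p.2 + f p.1)) = σ.prod ρ) :
    ∀ᵐ x ∂σ, f x ∈ translationStabilizer ρ := by
  have hshear : Measurable fun p : X × ℝ => (p.1, p.2 + f p.1) := by fun_prop
  simp only [mem_translationStabilizer_iff_Ioo_rat, ae_all_iff]
  intro a b
  refine ae_eq_of_forall_setLIntegral_eq_of_sigmaFinite
    ((measurable_measure_preimage_add_const ρ measurableSet_Ioo).comp hf) measurable_const
    fun A hA _ => ?_
  have hAB : MeasurableSet (A ×ˢ Ioo (a : ℝ) b) := hA.prod measurableSet_Ioo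
  have hfibre (x : X) : ρ (Prod.mk x ⁻¹' ((fun p => (p.1, p.2 + f p.1)) ⁻¹' A ×ˢ Ioo (a : ℝ) b)) =
      A.indicator (fun x => ρ ((· + f x) ⁻¹' Ioo (a : ℝ) b)) x := by
    by_cases hx : x ∈ A <;> simp [hx, preimage, mem_prod]
  calc ∫⁻ x in A, ρ ((· + f x) ⁻¹' Ioo (a : ℝ) b) ∂σ
      = (σ.prod ρ).map (fun p => (p.1, p.2 + f p.1)) (A ×ˢ Ioo (a : ℝ) b) := by
        rw [Measure.map_apply hshear hAB, Measure.prod_apply (hshear hAB), ← lintegral_indicator hA]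
        exact lintegral_congr fun x => (hfibre x).symm
    _ = ∫⁻ _ in A, ρ (Ioo (a : ℝ) b) ∂σ := by
        rw [h, Measure.prod_prod, setLIntegral_const, mul_comm]

theorem eq_top_of_ae_mem {G : Type*} [AddGroup G] [MeasurableSpace G] [MeasurableAdd G]
    (μ : Measure G) [NeZero μ] [μ.IsAddLeftInvariant] {S : AddSubgroup G}
    (hS : ∀ᵐ x ∂μ, x ∈ S) : S = ⊤ := by
  refine (AddSubgroup.eq_top_iff' S).2 fun x => ?_
  have hx : ∀ᵐ y ∂μ, x + y ∈ S := (measurePreserving_add_left μ x).quasiMeasurePreserving.ae hS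
  have : NeBot (ae μ) := ae_neBot.2 (NeZero.ne μ)
  obtain ⟨y, hy, hxy⟩ := (hS.and hx).exists
  exact (S.add_mem_cancel_right hy).1 hxy

theorem eq_top_of_ae_inner_mem {H : Type*} [NormedAddCommGroup H] [InnerProductSpace ℝ H]
    [FiniteDimensional ℝ H] [MeasurableSpace H] [BorelSpace H] {σ : Measure H} [SFinite σ]
    (hσ : ∃ᵐ ξ ∂σ, ξ ≠ 0) {T : AddSubgroup ℝ} (hT : MeasurableSet (T : Set ℝ))
    (h : ∀ v : H, ∀ᵐ ξ ∂σ, ⟪v, ξ⟫ ∈ T) : T = ⊤ := by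
  have hmeas : MeasurableSet {p : H × H | ⟪p.1, p.2⟫ ∈ T} :=
    measurable_fst.inner measurable_snd hT
  have hswap : ∀ᵐ ξ ∂σ, ∀ᵐ v : H, ⟪v, ξ⟫ ∈ T := (Measure.ae_ae_comm hmeas).1 (ae_of_all _ h)
  obtain ⟨ξ, hξ0, hξ⟩ := (hσ.and_eventually hswap).exists
  have htop : T.comap (innerₗ H ξ).toAddMonoidHom = ⊤ :=
    eq_top_of_ae_mem volume (hξ.mono fun v hv => by simpa [real_inner_comm] using hv)
  refine (AddSubgroup.eq_top_iff' T).2 fun x => ?_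
  have hx : (x / ‖ξ‖ ^ 2) • ξ ∈ T.comap (innerₗ H ξ).toAddMonoidHom := htop ▸ AddSubgroup.mem_top _
  simpa [inner_smul_right, hξ0] using hx

end Translation

section Spherical

variable {H : Type*} [NormedAddCommGroup H] [InnerProductSpace ℝ H]
  [MeasurableSpace H] [BorelSpace H]

/-- Rotation-invariant measures on the unit sphere, encoded as measures on the whole space that
are concentrated on the unit sphere. -/
structure IsSpherical (σ : Measure H) : Prop where
  ae_norm_eq_one : ∀ᵐ x ∂σ, ‖x‖ = 1
  map_eq : ∀ A : H ≃ₗᵢ[ℝ] H, σ.map A = σ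

theorem charFun_eq_of_norm_eq {σ : Measure H} (hσ : ∀ A : H ≃ₗᵢ[ℝ] H, σ.map A = σ)
    {x y : H} (hxy : ‖x‖ = ‖y‖) : charFun σ x = charFun σ y := by
  let A : H ≃ₗᵢ[ℝ] H := (Submodule.span ℝ {x - y})ᗮ.reflection
  have hA : A x = y := Submodule.reflection_sub hxy
  calc charFun σ x = ∫ u, Complex.exp (⟪A u, y⟫ * Complex.I) ∂σ := by
        simp only [charFun_apply, ← hA, LinearIsometryEquiv.inner_map_map]
    _ = charFun (σ.map A) y := by
        rw [charFun_apply, integral_map A.continuous.aemeasurable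
          (Continuous.aestronglyMeasurable (by fun_prop))]
    _ = charFun σ y := by rw [hσ A]

theorem integral_charFun_smul_comm [SecondCountableTopology H] (σ τ : Measure H)
    [IsFiniteMeasure σ] [IsFiniteMeasure τ] (c : ℝ) :
    ∫ x, charFun τ (c • x) ∂σ = ∫ x, charFun σ (c • x) ∂τ := by
  have hint : Integrable
      (Function.uncurry fun x y : H => Complex.exp (⟪y, c • x⟫ * Complex.I)) (σ.prod τ) := by
    refine .of_bound (C := 1) (Continuous.aestronglyMeasurable ?_) (ae_of_all _ fun p => ?_)
    · simp only [Function.uncurry_def]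
      fun_prop
    · exact (Complex.norm_exp_ofReal_mul_I _).le
  simp only [charFun_apply]
  rw [integral_integral_swap hint]
  simp only [inner_smul_right, real_inner_comm]

namespace IsSpherical

variable {σ τ : Measure H}

theorem integral_charFun_norm_smul (hσ : IsSpherical σ) (hτ : IsSpherical τ) (t : H) :
    ∫ x, charFun τ (‖t‖ • x) ∂σ = σ.real univ • charFun τ t := by
  rw [← integral_const]
  refine integral_congr_ae (hσ.ae_norm_eq_one.mono fun x hx => ?_)
  exact charFun_eq_of_norm_eq hτ.map_eq (by simp [norm_smul, hx])

theorem measure_univ_smul_comm [CompleteSpace H] [SecondCountableTopology H] [IsFiniteMeasure σ]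
    [IsFiniteMeasure τ] (hσ : IsSpherical σ) (hτ : IsSpherical τ) : σ univ • τ = τ univ • σ := by
  have := Measure.smul_finite τ (measure_ne_top σ univ)
  have := Measure.smul_finite σ (measure_ne_top τ univ)
  refine Measure.ext_of_charFun (funext fun t => ?_)
  have ht : σ.real univ • charFun τ t = τ.real univ • charFun σ t := by
    rw [← hσ.integral_charFun_norm_smul hτ, ← hτ.integral_charFun_norm_smul hσ,
      integral_charFun_smul_comm]
  simpa only [charFun_apply, integral_smul_measure, Measure.real] using ht

end IsSpherical

theorem exists_isSpherical_isProbabilityMeasure (H : Type*) [NormedAddCommGroup H]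
    [InnerProductSpace ℝ H] [FiniteDimensional ℝ H] [Nontrivial H] [MeasurableSpace H]
    [BorelSpace H] : ∃ σ : Measure H, IsProbabilityMeasure σ ∧ IsSpherical σ := by
  let direction : H → H := fun x => ‖x‖⁻¹ • x
  have hdir : Measurable direction := by fun_prop
  let π : Measure H := ProbabilityTheory.cond volume (Metric.ball 0 1)
  have hπ : IsProbabilityMeasure π :=
    ProbabilityTheory.cond_isProbabilityMeasure_of_finite
      (Metric.measure_ball_pos _ _ one_pos).ne' measure_ball_lt_top.ne
  have hπA (A : H ≃ₗᵢ[ℝ] H) : π.map A = π := by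
    have hball : A ⁻¹' Metric.ball 0 1 = Metric.ball 0 1 := by
      ext x
      simp
    have h := (A.measurePreserving.restrict_preimage
      (s := Metric.ball 0 1) measurableSet_ball).map_eq
    rw [hball] at h
    simp only [π, ProbabilityTheory.cond, Measure.map_smul, h]
  refine ⟨π.map direction, Measure.isProbabilityMeasure_map hdir.aemeasurable, ?_, fun A => ?_⟩
  · rw [ae_map_iff hdir.aemeasurable (measurableSet_eq_fun measurable_norm measurable_const)]
    have hne : ∀ᵐ x ∂π, x ≠ 0 :=
      ProbabilityTheory.cond_absolutelyContinuous.ae_le (Measure.ae_ne volume 0)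
    filter_upwards [hne] with x hx
    simp [direction, norm_smul, hx]
  · have hcomm : A ∘ direction = direction ∘ A := by
      ext x
      simp [direction]
    have hA : Measurable A := A.continuous.measurable
    rw [Measure.map_map hA hdir, hcomm, ← Measure.map_map hdir hA, hπA]

end Spherical

section NormalOffset

variable {H : Type*} [NormedAddCommGroup H] [InnerProductSpace ℝ H]
  [MeasurableSpace H]

/-- The defining properties of the natural measure on half-spaces, written in terms of the pairs
`(ξ, t)` of unit inner normals and offsets, on which the rigid motions `u ↦ A u` and `u ↦ u + v`
act by `(A ξ, t)` and `(ξ, t + ⟪v, ξ⟫)`. -/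
structure IsNormalOffsetMeasure (m : Measure (H × ℝ)) : Prop where
  ae_norm_eq_one : ∀ᵐ p ∂m, ‖p.1‖ = 1
  map_rotate : ∀ A : H ≃ₗᵢ[ℝ] H, m.map (Prod.map A id) = m
  map_shear : ∀ v : H, m.map (fun p => (p.1, p.2 + ⟪v, p.1⟫)) = m
  measure_separating :
    ∀ v w : H, m {p | p.2 ≤ ⟪v, p.1⟫ ∧ ⟪w, p.1⟫ < p.2} = ENNReal.ofReal ‖v - w‖

namespace IsNormalOffsetMeasure

variable {m m' : Measure (H × ℝ)}

theorem eq_zero_of_subsingleton [Subsingleton H] (hm : IsNormalOffsetMeasure m) : m = 0 := by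
  rw [← ae_eq_bot, ← eventually_false_iff_eq_bot]
  exact hm.ae_norm_eq_one.mono fun p hp => by simp [Subsingleton.elim p.1 0] at hp

variable [BorelSpace H]

theorem isSpherical_fst_restrict (hm : IsNormalOffsetMeasure m) {B : Set ℝ}
    (hB : MeasurableSet B) : IsSpherical (m.restrict (Prod.snd ⁻¹' B)).fst where
  ae_norm_eq_one := by
    rw [Measure.fst, ae_map_iff measurable_fst.aemeasurable
      (measurableSet_eq_fun measurable_norm measurable_const)]
    exact ae_restrict_of_ae hm.ae_norm_eq_one
  map_eq A := by
    have hA : Measurable A := A.continuous.measurable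
    have hrotate : MeasurePreserving (Prod.map A id) m m :=
      ⟨hA.prodMap measurable_id, hm.map_rotate A⟩
    have h := (hrotate.restrict_preimage (measurable_snd hB)).map_eq
    rw [Measure.fst, Measure.map_map hA measurable_fst]
    conv_rhs => rw [← h, Measure.map_map measurable_fst hrotate.measurable]
    rfl

variable [FiniteDimensional ℝ H]

theorem measure_snd_preimage_lt_top (hm : IsNormalOffsetMeasure m) {B : Set ℝ}
    (hB : MeasurableSet B) (hBb : Bornology.IsBounded B) : m (Prod.snd ⁻¹' B) < ∞ := by
  obtain ⟨C, hC0, hC⟩ := hBb.subset_closedBall_lt 0 0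
  have hτ := hm.isSpherical_fst_restrict hB
  set τ := (m.restrict (Prod.snd ⁻¹' B)).fst with hτ_def
  have hfinite : τ (Metric.sphere 0 1) < ∞ := by
    refine (isCompact_sphere (0 : H) 1).measure_lt_top_of_nhdsWithin fun ξ hξ => ?_
    have hξ1 : ‖ξ‖ = 1 := by simpa using hξ
    let v : H := (2 * C) • ξ
    let U : Set H := {η | C < ⟪v, η⟫}
    have hU : IsOpen U := isOpen_lt (by fun_prop) (by fun_prop)
    have hξU : C < ⟪v, ξ⟫ := by
      simp only [v, inner_smul_left, real_inner_self_eq_norm_sq, hξ1, conj_trivial]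
      linarith
    refine ⟨U, mem_nhdsWithin_of_mem_nhds (hU.mem_nhds hξU), ?_⟩
    calc τ U = m (Prod.fst ⁻¹' U ∩ Prod.snd ⁻¹' B) := by
          rw [hτ_def, Measure.fst_apply hU.measurableSet,
            Measure.restrict_apply (measurable_fst hU.measurableSet)]
      _ ≤ m {p | p.2 ≤ ⟪v, p.1⟫ ∧ ⟪-v, p.1⟫ < p.2} := by
          refine measure_mono fun p ⟨(hpU : C < ⟪v, p.1⟫), hpB⟩ => ?_
          have hpC : |p.2| ≤ C := by simpa using hC hpB
          have := abs_le.1 hpC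
          exact ⟨by linarith, by rw [inner_neg_left]; linarith⟩
      _ < ∞ := (hm.measure_separating v (-v)).trans_lt ENNReal.ofReal_lt_top
  have hsphere : (Metric.sphere 0 1 : Set H) =ᵐ[τ] univ :=
    eventuallyEq_univ.2 (hτ.ae_norm_eq_one.mono fun x hx => by simpa using hx)
  rwa [measure_congr hsphere, hτ_def, Measure.fst_univ, Measure.restrict_apply_univ] at hfinite

theorem isLocallyFiniteMeasure_snd (hm : IsNormalOffsetMeasure m) :
    IsLocallyFiniteMeasure m.snd where
  finiteAtNhds x := by
    refine ⟨Metric.ball x 1, Metric.ball_mem_nhds x one_pos, ?_⟩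
    rw [Measure.snd_apply measurableSet_ball]
    exact hm.measure_snd_preimage_lt_top measurableSet_ball Metric.isBounded_ball

variable {σ : Measure H} [IsProbabilityMeasure σ]

theorem measure_prod_eq_mul (hm : IsNormalOffsetMeasure m) (hσ : IsSpherical σ) {A : Set H}
    (hA : MeasurableSet A) {B : Set ℝ} (hB : MeasurableSet B) (hBb : Bornology.IsBounded B) :
    m (A ×ˢ B) = σ A * m.snd B := by
  have : IsFiniteMeasure (m.restrict (Prod.snd ⁻¹' B)) :=
    isFiniteMeasure_restrict.2 (hm.measure_snd_preimage_lt_top hB hBb).ne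
  have h := hσ.measure_univ_smul_comm (hm.isSpherical_fst_restrict hB)
  calc m (A ×ˢ B) = (m.restrict (Prod.snd ⁻¹' B)).fst A := by
        rw [Measure.fst_apply hA, Measure.restrict_apply (measurable_fst hA), Set.prod_eq]
    _ = σ A * m.snd B := by
        rw [← one_smul ℝ≥0∞ (Measure.fst _), ← measure_univ (μ := σ), h, Measure.smul_apply,
          Measure.fst_univ, Measure.restrict_apply_univ, Measure.snd_apply hB, smul_eq_mul,
          mul_comm]

theorem eq_prod_snd (hm : IsNormalOffsetMeasure m) (hσ : IsSpherical σ) : m = σ.prod m.snd := by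
  have := hm.isLocallyFiniteMeasure_snd
  refine (Measure.prod_eq_generateFrom MeasurableSpace.generateFrom_measurableSet
    (Real.borel_eq_generateFrom_Ioo_rat.symm.trans BorelSpace.measurable_eq.symm)
    MeasurableSpace.isPiSystem_measurableSet Real.isPiSystem_Ioo_rat σ.toFiniteSpanningSetsIn
    (Real.finiteSpanningSetsInIooRat m.snd) fun A hA B hB => ?_).symm
  simp only [mem_iUnion, mem_singleton_iff] at hB
  obtain ⟨a, b, -, rfl⟩ := hB
  exact hm.measure_prod_eq_mul hσ hA measurableSet_Ioo (Metric.isBounded_Ioo _ _)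

theorem translationStabilizer_snd_eq_top (hm : IsNormalOffsetMeasure m) (hσ : IsSpherical σ) :
    translationStabilizer m.snd = ⊤ := by
  have := hm.isLocallyFiniteMeasure_snd
  have hσ0 : ∀ᵐ ξ ∂σ, ξ ≠ 0 :=
    hσ.ae_norm_eq_one.mono fun ξ hξ => norm_ne_zero_iff.1 (by simp [hξ])
  refine eq_top_of_ae_inner_mem hσ0.frequently (measurableSet_translationStabilizer _) fun v =>
    ae_mem_translationStabilizer_of_map_shear (by fun_prop) ?_
  rw [← hm.eq_prod_snd hσ, hm.map_shear]

theorem exists_eq_smul_prod_volume (hm : IsNormalOffsetMeasure m) (hσ : IsSpherical σ) :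
    ∃ c : ℝ≥0∞, m = c • σ.prod volume := by
  have := hm.isLocallyFiniteMeasure_snd
  have : m.snd.IsAddLeftInvariant := by
    refine ⟨fun x => ?_⟩
    simp only [add_comm x, ← mem_translationStabilizer, hm.translationStabilizer_snd_eq_top hσ,
      AddSubgroup.mem_top]
  refine ⟨m.snd.addHaarScalarFactor volume, ?_⟩
  conv_lhs => rw [hm.eq_prod_snd hσ, Measure.isAddLeftInvariant_eq_smul m.snd volume]
  exact Measure.prod_smul_right _

theorem unique (hm : IsNormalOffsetMeasure m) (hm' : IsNormalOffsetMeasure m') : m = m' := by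
  rcases subsingleton_or_nontrivial H with _ | _
  · rw [hm.eq_zero_of_subsingleton, hm'.eq_zero_of_subsingleton]
  obtain ⟨σ, _, hσ⟩ := exists_isSpherical_isProbabilityMeasure H
  obtain ⟨c, rfl⟩ := hm.exists_eq_smul_prod_volume hσ
  obtain ⟨c', rfl⟩ := hm'.exists_eq_smul_prod_volume hσ
  obtain ⟨v, hv⟩ := exists_norm_eq H zero_le_one
  have hc := hm.measure_separating v 0
  have hc' := hm'.measure_separating v 0
  simp only [Measure.smul_apply, smul_eq_mul, sub_zero, hv, ENNReal.ofReal_one] at hc hc'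
  rw [ENNReal.eq_inv_of_mul_eq_one_left hc, ENNReal.eq_inv_of_mul_eq_one_left hc']

end IsNormalOffsetMeasure

end NormalOffset

section Geometry

variable {H : Type*} [NormedAddCommGroup H] [InnerProductSpace ℝ H]

theorem eq_of_setOf_le_inner_subset {ξ ξ' : H} {t t' : ℝ} (hξ : ‖ξ‖ = 1) (hξ' : ‖ξ'‖ = 1)
    (h : {u | t ≤ ⟪u, ξ⟫} ⊆ {u | t' ≤ ⟪u, ξ'⟫}) : ξ = ξ' := by
  have hle : ⟪ξ, ξ'⟫ ≤ 1 := by simpa [hξ, hξ'] using real_inner_le_norm ξ ξ'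
  refine (inner_eq_one_iff_of_norm_eq_one hξ hξ').1 (hle.antisymm ?_)
  -- Otherwise a ray in the direction `ξ - ξ'` stays in the first half-space and leaves the second.
  have hray (r : ℝ) (hr : 0 ≤ r) : t' ≤ t * ⟪ξ, ξ'⟫ + r * (⟪ξ, ξ'⟫ - 1) := by
    have hmem : t • ξ + r • (ξ - ξ') ∈ {u | t ≤ ⟪u, ξ⟫} := by
      simp only [mem_ofPred_eq, inner_add_left, inner_smul_left, inner_sub_left,
        real_inner_self_eq_norm_sq, hξ, conj_trivial, real_inner_comm ξ ξ']
      nlinarith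
    simpa [inner_add_left, inner_smul_left, inner_sub_left, hξ'] using h hmem
  by_contra! hlt
  have hr := hray ((|t * ⟪ξ, ξ'⟫ - t'| + 1) / (1 - ⟪ξ, ξ'⟫))
    (div_nonneg (by positivity) (by linarith))
  rw [← neg_sub 1, mul_neg, div_mul_cancel₀ _ (by linarith)] at hr
  linarith [le_abs_self (t * ⟪ξ, ξ'⟫ - t')]

theorem closure_setOf_lt_inner {ξ : H} (hξ : ξ ≠ 0) (t : ℝ) :
    closure {u | t < ⟪u, ξ⟫} = {u | t ≤ ⟪u, ξ⟫} := by
  have hξ' : innerSL ℝ ξ ≠ 0 := fun h => hξ (by simpa using DFunLike.congr_fun h ξ)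
  have h := ((innerSL ℝ ξ).isOpenMap_of_ne_zero hξ').preimage_closure_eq_closure_preimage
    (innerSL ℝ ξ).continuous (Ioi t)
  simpa only [closure_Ioi, preimage, innerSL_apply_apply, mem_Ici, mem_Ioi,
    real_inner_comm _ ξ] using h.symm

theorem exists_isometryEquiv_extension {K : Type*} [NormedAddCommGroup K] [InnerProductSpace ℝ K]
    [FiniteDimensional ℝ K] (ι : H →ₗᵢ[ℝ] K) (φ : H ≃ᵢ H) :
    ∃ φ' : K ≃ᵢ K, ∀ u, φ' (ι u) = ι (φ u) := by
  let L : LinearMap.range ι.toLinearMap →ₗᵢ[ℝ] K :=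
    (ι.comp φ.toRealLinearIsometryEquiv.toLinearIsometry).comp
      ι.equivRange.symm.toLinearIsometry
  let A : K ≃ₗᵢ[ℝ] K := L.extend.toLinearIsometryEquiv rfl
  have hA (u : H) : A (ι u) = ι (φ.toRealLinearIsometryEquiv u) :=
    (L.extend_apply (ι.equivRange u)).trans (by simp [L])
  exact ⟨A.toIsometryEquiv.trans (IsometryEquiv.addRight (ι (φ 0))), fun u => by simp [hA]⟩

end Geometry

namespace HalfSpaces

variable {H : Type*} [NormedAddCommGroup H] [InnerProductSpace ℝ H]

section Coordinates

/-- The half-space with unit inner normal `ξ` and offset `t`. -/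
def ofNormalOffset (ξ : H) (t : ℝ) (hξ : ‖ξ‖ = 1) : HalfSpaces H :=
  ⟨{u | t ≤ ⟪u, ξ⟫}, ξ, t, hξ, rfl⟩

/-- The unit inner normal of a half-space. -/
noncomputable def normal (M : HalfSpaces H) : H :=
  M.2.choose

/-- The signed distance from the origin to the boundary of a half-space, along its normal. -/
noncomputable def offset (M : HalfSpaces H) : ℝ :=
  M.2.choose_spec.choose

/-- The pair by which `IsNormalOffsetMeasure` describes a half-space. -/
noncomputable def coord (M : HalfSpaces H) : H × ℝ :=
  (normal M, offset M)

theorem norm_normal (M : HalfSpaces H) : ‖normal M‖ = 1 :=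
  M.2.choose_spec.choose_spec.1

theorem val_eq (M : HalfSpaces H) : M.1 = {u | offset M ≤ ⟪u, normal M⟫} :=
  M.2.choose_spec.choose_spec.2

theorem mem_iff {M : HalfSpaces H} {u : H} : u ∈ M.1 ↔ offset M ≤ ⟪u, normal M⟫ :=
  Set.ext_iff.1 M.val_eq u

theorem coord_eq {M : HalfSpaces H} {ξ : H} {t : ℝ} (hξ : ‖ξ‖ = 1)
    (h : M.1 = {u | t ≤ ⟪u, ξ⟫}) : coord M = (ξ, t) := by
  have hM := M.val_eq.symm.trans h
  have hnormal : normal M = ξ := eq_of_setOf_le_inner_subset M.norm_normal hξ hM.subset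
  have hiff (s : ℝ) : offset M ≤ s ↔ t ≤ s := by
    simpa [inner_smul_left, hnormal, hξ] using Set.ext_iff.1 hM (s • ξ)
  exact Prod.ext hnormal (le_antisymm ((hiff t).2 le_rfl) ((hiff _).1 le_rfl))

/-- Half-spaces are parametrized by their unit inner normal and their offset. -/
noncomputable def equivSphereProd : HalfSpaces H ≃ Metric.sphere (0 : H) 1 × ℝ where
  toFun M := (⟨normal M, by simp [norm_normal]⟩, offset M)
  invFun p := ofNormalOffset p.1 p.2 (by simp)
  left_inv M := Subtype.ext M.val_eq.symm
  right_inv p := by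
    have h : coord (ofNormalOffset p.1.1 p.2 (by simp)) = (p.1.1, p.2) := coord_eq (by simp) rfl
    rw [coord, Prod.mk.injEq] at h
    exact Prod.ext (Subtype.ext h.1) h.2

end Coordinates

section Topology

theorem isClosed (M : HalfSpaces H) : IsClosed M.1 := by
  rw [val_eq]
  exact isClosed_le (by fun_prop) (by fun_prop)

theorem nonempty (M : HalfSpaces H) : M.1.Nonempty :=
  ⟨offset M • normal M, mem_iff.2 (by simp [inner_smul_left, norm_normal])⟩

theorem nonempty_compl (M : HalfSpaces H) : M.1ᶜ.Nonempty :=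
  ⟨(offset M - 1) • normal M, fun h =>
    not_le_of_gt (one_pos (α := ℝ)) (by simpa [inner_smul_left, norm_normal] using mem_iff.1 h)⟩

theorem closure_inter_dense (M : HalfSpaces H) {D : Set H} (hD : Dense D) :
    closure (M.1 ∩ D) = M.1 := by
  refine (closure_minimal inter_subset_left M.isClosed).antisymm ?_
  have hopen : IsOpen {u | offset M < ⟪u, normal M⟫} := isOpen_lt (by fun_prop) (by fun_prop)
  have hnormal : normal M ≠ 0 := norm_ne_zero_iff.1 (by simp [norm_normal])
  have hinterior : {u | offset M < ⟪u, normal M⟫} ⊆ M.1 := fun u hu => mem_iff.2 (le_of_lt hu)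
  calc M.1 = closure {u | offset M < ⟪u, normal M⟫} := by
        rw [closure_setOf_lt_inner hnormal, ← val_eq]
    _ ⊆ closure (M.1 ∩ D) := closure_minimal
        ((hD.open_subset_closure_inter hopen).trans
          (closure_mono (inter_subset_inter_left D hinterior))) isClosed_closure

theorem eq_of_dense {M N : HalfSpaces H} {D : Set H} (hD : Dense D)
    (h : ∀ d ∈ D, d ∈ M.1 ↔ d ∈ N.1) : M = N := by
  have hMN : M.1 ∩ D = N.1 ∩ D := by
    ext d
    exact and_congr_left fun hd => h d hd
  exact Subtype.ext (by rw [← M.closure_inter_dense hD, hMN, N.closure_inter_dense hD])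

end Topology

section RigidMotions

theorem image_val_eq (φ : H ≃ᵢ H) (M : HalfSpaces H) :
    φ '' M.1 = {u | offset M + ⟪φ 0, φ.toRealLinearIsometryEquiv (normal M)⟫ ≤
      ⟪u, φ.toRealLinearIsometryEquiv (normal M)⟫} := by
  ext u
  obtain ⟨w, rfl⟩ := φ.surjective u
  have hw : φ w = φ.toRealLinearIsometryEquiv w + φ 0 := by simp
  rw [φ.injective.mem_set_image, mem_iff, mem_ofPred_eq, hw, inner_add_left,
    LinearIsometryEquiv.inner_map_map, add_le_add_iff_right]

/-- The action of rigid motions on half-spaces. -/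
def image (φ : H ≃ᵢ H) (M : HalfSpaces H) : HalfSpaces H :=
  ⟨φ '' M.1, φ.toRealLinearIsometryEquiv (normal M),
    offset M + ⟪φ 0, φ.toRealLinearIsometryEquiv (normal M)⟫,
    by rw [LinearIsometryEquiv.norm_map, norm_normal], image_val_eq φ M⟩

theorem coord_image (φ : H ≃ᵢ H) (M : HalfSpaces H) :
    coord (image φ M) = (φ.toRealLinearIsometryEquiv (normal M),
      offset M + ⟪φ 0, φ.toRealLinearIsometryEquiv (normal M)⟫) :=
  coord_eq (by rw [LinearIsometryEquiv.norm_map, norm_normal]) (image_val_eq φ M)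

theorem image_surjective (φ : H ≃ᵢ H) : Function.Surjective (image φ) := fun N =>
  ⟨image φ.symm N, Subtype.ext (by simp [image, image_image])⟩

theorem image_mem_val_image_iff (φ : H ≃ᵢ H) {S : Set H} {A : Set (HalfSpaces H)} :
    φ '' S ∈ Subtype.val '' A ↔ S ∈ Subtype.val '' (image φ ⁻¹' A) := by
  constructor
  · rintro ⟨N, hN, hNS⟩
    obtain ⟨M, rfl⟩ := image_surjective φ N
    exact ⟨M, hN, φ.injective.image_injective hNS⟩
  · rintro ⟨M, hM, rfl⟩
    exact ⟨image φ M, hM, rfl⟩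

theorem setOf_image_mem_val_image (φ : H ≃ᵢ H) (A : Set (HalfSpaces H)) :
    {M : HalfSpaces H | φ '' M.1 ∈ Subtype.val '' A} = image φ ⁻¹' A := by
  ext M
  exact (image_mem_val_image_iff φ).trans Subtype.val_injective.mem_set_image

end RigidMotions

section Measurability

/-- The σ-algebra on half-spaces is generated by the sets `{M | v ∈ M}`. -/
class GeneratedByPoints (H : Type*) [NormedAddCommGroup H] [InnerProductSpace ℝ H]
    [m : MeasurableSpace (HalfSpaces H)] : Prop where
  eq_generateFrom : m = .generateFrom {A | ∃ v : H, A = {M : HalfSpaces H | v ∈ M.1}}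

variable [MeasurableSpace (HalfSpaces H)] [GeneratedByPoints H]

theorem measurableSet_mem (v : H) : MeasurableSet {M : HalfSpaces H | v ∈ M.1} := by
  rw [GeneratedByPoints.eq_generateFrom (H := H)]
  exact .basic _ ⟨v, rfl⟩

theorem measurableSet_mem_notMem (v w : H) :
    MeasurableSet {M : HalfSpaces H | v ∈ M.1 ∧ w ∉ M.1} :=
  (measurableSet_mem v).inter (measurableSet_mem w).compl

theorem measurable_of_measurableSet_mem {X : Type*} [MeasurableSpace X] {f : X → HalfSpaces H}
    (hf : ∀ v : H, MeasurableSet {x | v ∈ (f x).1}) : Measurable f := by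
  rw [GeneratedByPoints.eq_generateFrom (H := H)]
  refine measurable_generateFrom ?_
  rintro _ ⟨v, rfl⟩
  exact hf v

theorem measurable_image (φ : H ≃ᵢ H) : Measurable (image φ) := by
  refine measurable_of_measurableSet_mem fun v => ?_
  obtain ⟨w, rfl⟩ := φ.surjective v
  simpa only [image, φ.injective.mem_set_image] using measurableSet_mem w

theorem countablySeparated [TopologicalSpace.SeparableSpace H] :
    MeasurableSpace.CountablySeparated (HalfSpaces H) := by
  obtain ⟨D, hDc, hD⟩ := TopologicalSpace.exists_countable_dense H
  refine ⟨⟨(fun v => {M : HalfSpaces H | v ∈ M.1}) '' D, hDc.image _, ?_, ?_⟩⟩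
  · rintro _ ⟨v, -, rfl⟩
    exact measurableSet_mem v
  · exact fun M _ N _ h => eq_of_dense hD fun d hd => h _ ⟨d, hd, rfl⟩

theorem measurableEmbedding_coord [CompleteSpace H] [SecondCountableTopology H]
    [MeasurableSpace H] [BorelSpace H] :
    MeasurableEmbedding (coord : HalfSpaces H → H × ℝ) := by
  have := countablySeparated (H := H)
  have hsphere : MeasurableSet (Metric.sphere (0 : H) 1) := Metric.isClosed_sphere.measurableSet
  have := hsphere.standardBorel
  have hsymm : Measurable (equivSphereProd (H := H)).symm :=
    measurable_of_measurableSet_mem fun v =>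
      measurableSet_le measurable_snd (measurable_const.inner (by fun_prop))
  -- Lusin–Souslin: a measurable bijection from a standard Borel space is an isomorphism.
  have hequiv : Measurable (equivSphereProd (H := H)) := fun s hs => by
    rw [← Equiv.image_symm_eq_preimage]
    exact (hsymm.measurableEmbedding (Equiv.injective _)).measurableSet_image.2 hs
  let e : HalfSpaces H ≃ᵐ Metric.sphere (0 : H) 1 × ℝ := ⟨equivSphereProd, hequiv, hsymm⟩
  exact ((MeasurableEmbedding.subtype_coe hsphere).prodMap .id).comp e.measurableEmbedding

end Measurability

end HalfSpaces

namespace IsHalfSpaceMeasure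

open HalfSpaces

variable {H : Type*} [NormedAddCommGroup H] [InnerProductSpace ℝ H]
  [MeasurableSpace (HalfSpaces H)] {μ ν : Measure (HalfSpaces H)}

theorem generatedByPoints (hμ : IsHalfSpaceMeasure H μ) : GeneratedByPoints H :=
  ⟨hμ.1⟩

theorem measurePreserving_image (hμ : IsHalfSpaceMeasure H μ) (φ : H ≃ᵢ H) :
    MeasurePreserving (HalfSpaces.image φ) μ μ := by
  have := hμ.generatedByPoints
  refine ⟨measurable_image φ, ?_⟩
  ext A hA
  rw [Measure.map_apply (measurable_image φ) hA, ← setOf_image_mem_val_image, hμ.2.1 φ A hA]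

theorem isNormalOffsetMeasure_map_coord [CompleteSpace H] [SecondCountableTopology H]
    [MeasurableSpace H] [BorelSpace H] (hμ : IsHalfSpaceMeasure H μ) :
    IsNormalOffsetMeasure (μ.map coord) := by
  have := hμ.generatedByPoints
  have hc : Measurable (coord : HalfSpaces H → H × ℝ) := measurableEmbedding_coord.measurable
  have hinv (φ : H ≃ᵢ H) {g : H × ℝ → H × ℝ} (hg : Measurable g)
      (h : ∀ M : HalfSpaces H, coord (image φ M) = g (coord M)) :
      (μ.map coord).map g = μ.map coord := by
    have hcomp : g ∘ coord = coord ∘ image φ := funext fun M => (h M).symm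
    rw [Measure.map_map hg hc, hcomp, ← Measure.map_map hc (measurable_image φ),
      (hμ.measurePreserving_image φ).map_eq]
  refine ⟨?_, fun A => ?_, fun v => ?_, fun v w => ?_⟩
  · rw [ae_map_iff hc.aemeasurable (measurableSet_eq_fun measurable_fst.norm measurable_const)]
    exact ae_of_all _ norm_normal
  · refine hinv A.toIsometryEquiv (A.continuous.measurable.prodMap measurable_id) fun M => ?_
    rw [coord_image]
    simp [coord]
  · refine hinv (IsometryEquiv.addRight v) ?_ fun M => by rw [coord_image]; simp [coord]
    exact measurable_fst.prodMk (measurable_snd.add (measurable_const.inner measurable_fst))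
  · have hvw : MeasurableSet {p : H × ℝ | p.2 ≤ ⟪v, p.1⟫ ∧ ⟪w, p.1⟫ < p.2} :=
      (measurableSet_le measurable_snd (measurable_const.inner measurable_fst)).inter
        (measurableSet_lt (measurable_const.inner measurable_fst) measurable_snd)
    rw [Measure.map_apply hc hvw, ← hμ.2.2 v w]
    simp [coord, mem_iff, preimage]

theorem unique [FiniteDimensional ℝ H] (hμ : IsHalfSpaceMeasure H μ)
    (hν : IsHalfSpaceMeasure H ν) : μ = ν := by
  borelize H
  have := FiniteDimensional.complete ℝ H
  have := hμ.generatedByPoints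
  have h := hμ.isNormalOffsetMeasure_map_coord.unique hν.isNormalOffsetMeasure_map_coord
  rw [← measurableEmbedding_coord.comap_map μ, h, measurableEmbedding_coord.comap_map ν]

end IsHalfSpaceMeasure

namespace HalfSpaces

variable {H K : Type*} [NormedAddCommGroup H] [InnerProductSpace ℝ H]
  [NormedAddCommGroup K] [InnerProductSpace ℝ K]

/-- The half-spaces of `K` whose trace on `H` is a half-space belonging to `E`. -/
def tracePreimage (ι : H →ₗᵢ[ℝ] K) (E : Set (HalfSpaces H)) : Set (HalfSpaces K) :=
  {N | ι ⁻¹' N.1 ∈ Subtype.val '' E}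

/-- The domain of the partial map `N ↦ N ∩ H`: the half-spaces of `K` that meet `H` in a
half-space. -/
def traceDomain (ι : H →ₗᵢ[ℝ] K) : Set (HalfSpaces K) :=
  {N | ∃ M : HalfSpaces H, M.1 = ι ⁻¹' N.1}

/-- The map `N ↦ N ∩ H` on its domain, with `H` embedded in `K` by `ι`. -/
noncomputable def trace (ι : H →ₗᵢ[ℝ] K) (N : traceDomain ι) : HalfSpaces H :=
  N.2.choose

theorem val_trace (ι : H →ₗᵢ[ℝ] K) (N : traceDomain ι) : (trace ι N).1 = ι ⁻¹' N.1.1 :=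
  N.2.choose_spec

theorem val_image_preimage_trace (ι : H →ₗᵢ[ℝ] K) (E : Set (HalfSpaces H)) :
    Subtype.val '' (trace ι ⁻¹' E) = tracePreimage ι E := by
  ext N
  constructor
  · rintro ⟨N, hN, rfl⟩
    exact ⟨_, hN, val_trace ι N⟩
  · rintro ⟨M, hM, hMN⟩
    have htrace : trace ι ⟨N, M, hMN⟩ = M := Subtype.ext ((val_trace ι _).trans hMN.symm)
    exact ⟨⟨N, M, hMN⟩, by rwa [mem_preimage, htrace], rfl⟩

theorem preimage_image_tracePreimage {ι : H →ₗᵢ[ℝ] K} {φ : H ≃ᵢ H} {φ' : K ≃ᵢ K}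
    (hφ : ∀ u, φ' (ι u) = ι (φ u)) (E : Set (HalfSpaces H)) :
    image φ' ⁻¹' tracePreimage ι E = tracePreimage ι (image φ ⁻¹' E) := by
  ext N
  have hN : ι ⁻¹' (φ' '' N.1) = φ '' (ι ⁻¹' N.1) := by
    ext u
    obtain ⟨w, rfl⟩ := φ.surjective u
    rw [mem_preimage, ← hφ, φ'.injective.mem_set_image, φ.injective.mem_set_image, mem_preimage]
  change ι ⁻¹' (φ' '' N.1) ∈ Subtype.val '' E ↔ _
  rw [hN, image_mem_val_image_iff]
  rfl

theorem mem_traceDomain [CompleteSpace H] {ι : H →ₗᵢ[ℝ] K} {N : HalfSpaces K} {v w : H}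
    (hv : ι v ∈ N.1) (hw : ι w ∉ N.1) : N ∈ traceDomain ι := by
  obtain ⟨η, hη⟩ : ∃ η : H, ∀ u, ⟪ι u, normal N⟫ = ⟪u, η⟫ :=
    ⟨(InnerProductSpace.toDual ℝ H).symm (innerSL ℝ (normal N) ∘L ι.toContinuousLinearMap),
      fun u => by rw [real_inner_comm _ u]; simp [real_inner_comm (normal N)]⟩
  rw [mem_iff, hη] at hv hw
  have hη0 : η ≠ 0 := by
    rintro rfl
    exact hw (by simpa using hv)
  have hpos : 0 < ‖η‖⁻¹ := inv_pos.2 (norm_pos_iff.2 hη0)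
  refine ⟨ofNormalOffset (‖η‖⁻¹ • η) (‖η‖⁻¹ * offset N) (by simp [norm_smul, hη0]), ?_⟩
  ext u
  change ‖η‖⁻¹ * offset N ≤ ⟪u, ‖η‖⁻¹ • η⟫ ↔ ι u ∈ N.1
  rw [mem_iff, hη, inner_smul_right, mul_le_mul_iff_right₀ hpos]

theorem tracePreimage_setOf_mem_notMem [CompleteSpace H] (ι : H →ₗᵢ[ℝ] K) (v w : H) :
    tracePreimage ι {M | v ∈ M.1 ∧ w ∉ M.1} = {N | ι v ∈ N.1 ∧ ι w ∉ N.1} := by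
  ext N
  constructor
  · rintro ⟨M, ⟨hv, hw⟩, hMN⟩
    exact ⟨hMN.subset hv, fun h => hw (hMN.symm.subset h)⟩
  · rintro ⟨hv, hw⟩
    obtain ⟨M, hMN⟩ := mem_traceDomain hv hw
    exact ⟨M, ⟨hMN.symm.subset hv, fun h => hw (hMN.subset h)⟩, hMN⟩

variable [MeasurableSpace (HalfSpaces K)] [GeneratedByPoints K]

theorem measurableSet_traceDomain [CompleteSpace H] [TopologicalSpace.SeparableSpace H]
    (ι : H →ₗᵢ[ℝ] K) : MeasurableSet (traceDomain ι) := by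
  obtain ⟨D, hDc, hD⟩ := TopologicalSpace.exists_countable_dense H
  have hD_union : traceDomain ι = ⋃ d ∈ D, ⋃ e ∈ D,
      {N : HalfSpaces K | ι d ∈ N.1 ∧ ι e ∉ N.1} := by
    ext N
    simp only [mem_iUnion]
    constructor
    · rintro ⟨M, hM⟩
      obtain ⟨d, hdM, hdD⟩ : (M.1 ∩ D).Nonempty := by
        rw [← closure_nonempty_iff, M.closure_inter_dense hD]
        exact M.nonempty
      obtain ⟨e, heM, heD⟩ := hD.inter_open_nonempty _ M.isClosed.isOpen_compl M.nonempty_compl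
      rw [hM] at hdM heM
      exact ⟨d, hdD, e, heD, hdM, heM⟩
    · rintro ⟨d, -, e, -, hd, he⟩
      exact mem_traceDomain hd he
  rw [hD_union]
  exact .biUnion hDc fun d _ => .biUnion hDc fun e _ => measurableSet_mem_notMem _ _

variable [MeasurableSpace (HalfSpaces H)] [GeneratedByPoints H]

theorem measurable_trace (ι : H →ₗᵢ[ℝ] K) : Measurable (trace ι) := by
  refine measurable_of_measurableSet_mem fun v => ?_
  simp only [val_trace]
  exact measurable_subtype_coe (measurableSet_mem (ι v))

theorem measurableSet_tracePreimage [CompleteSpace H] [TopologicalSpace.SeparableSpace H]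
    (ι : H →ₗᵢ[ℝ] K) {E : Set (HalfSpaces H)} (hE : MeasurableSet E) :
    MeasurableSet (tracePreimage ι E) := by
  rw [← val_image_preimage_trace]
  exact (measurableSet_traceDomain ι).subtype_image (measurable_trace ι hE)

/-- The pushforward of a measure on the half-spaces of `K` along the partial map `N ↦ N ∩ H`. -/
noncomputable def traceMeasure (ι : H →ₗᵢ[ℝ] K) (μ' : Measure (HalfSpaces K)) :
    Measure (HalfSpaces H) :=
  (μ'.comap Subtype.val).map (trace ι)

theorem traceMeasure_apply [CompleteSpace H] [TopologicalSpace.SeparableSpace H]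
    (ι : H →ₗᵢ[ℝ] K) (μ' : Measure (HalfSpaces K)) {E : Set (HalfSpaces H)}
    (hE : MeasurableSet E) : traceMeasure ι μ' E = μ' (tracePreimage ι E) := by
  rw [traceMeasure, Measure.map_apply (measurable_trace ι) hE,
    (MeasurableEmbedding.subtype_coe (measurableSet_traceDomain ι)).comap_apply,
    val_image_preimage_trace]

end HalfSpaces

open HalfSpaces in
theorem IsHalfSpaceMeasure.traceMeasure {H K : Type*} [NormedAddCommGroup H]
    [InnerProductSpace ℝ H] [NormedAddCommGroup K] [InnerProductSpace ℝ K]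
    [FiniteDimensional ℝ K] [MeasurableSpace (HalfSpaces H)] [GeneratedByPoints H]
    [MeasurableSpace (HalfSpaces K)] {μ' : Measure (HalfSpaces K)}
    (hμ' : IsHalfSpaceMeasure K μ') (ι : H →ₗᵢ[ℝ] K) :
    IsHalfSpaceMeasure H (traceMeasure ι μ') := by
  have := hμ'.generatedByPoints
  have : FiniteDimensional ℝ H := .of_injective ι.toLinearMap ι.injective
  have := FiniteDimensional.complete ℝ H
  refine ⟨GeneratedByPoints.eq_generateFrom, fun φ A hA => ?_, fun v w => ?_⟩
  · obtain ⟨φ', hφ'⟩ := exists_isometryEquiv_extension ι φ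
    rw [setOf_image_mem_val_image, traceMeasure_apply ι μ' (measurable_image φ hA),
      traceMeasure_apply ι μ' hA, ← preimage_image_tracePreimage hφ',
      (hμ'.measurePreserving_image φ').measure_preimage
        (measurableSet_tracePreimage ι hA).nullMeasurableSet]
  · rw [traceMeasure_apply ι μ' (measurableSet_mem_notMem v w), tracePreimage_setOf_mem_notMem,
      hμ'.2.2, ← map_sub, ι.norm_map]

/-- For `ℋ ⊆ ℋ'`, the pushforward `ν` of `μ'` along `M' ↦ M' ∩ ℋ` is
invariant under rigid motions of `ℋ`, has the right normalization, and hence equals `μ`. -/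
theorem pushforward_halfspace_measure_eq
    (H : Type*) [NormedAddCommGroup H] [InnerProductSpace ℝ H] [FiniteDimensional ℝ H]
    (H' : Type*) [NormedAddCommGroup H'] [InnerProductSpace ℝ H'] [FiniteDimensional ℝ H']
    (ι : H →ₗᵢ[ℝ] H')
    [MeasurableSpace (HalfSpaces H)] [MeasurableSpace (HalfSpaces H')]
    (μ : Measure (HalfSpaces H)) (μ' : Measure (HalfSpaces H'))
    (hμ : IsHalfSpaceMeasure H μ) (hμ' : IsHalfSpaceMeasure H' μ') :
    ∃ ν : Measure (HalfSpaces H),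
      (∀ E : Set (HalfSpaces H), MeasurableSet E →
        ν E = μ' {M' : HalfSpaces H' | ⇑ι ⁻¹' M'.1 ∈ Subtype.val '' E}) ∧
      (∀ (φ : H ≃ᵢ H) (A : Set (HalfSpaces H)), MeasurableSet A →
        ν {M : HalfSpaces H | ⇑φ '' M.1 ∈ Subtype.val '' A} = ν A) ∧
      (∀ v w : H, ν {M : HalfSpaces H | v ∈ M.1 ∧ w ∉ M.1} = ENNReal.ofReal ‖v - w‖) ∧
      ν = μ := by
  have := hμ.generatedByPoints
  have := hμ'.generatedByPoints
  have := FiniteDimensional.complete ℝ H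
  have hν := hμ'.traceMeasure ι
  exact ⟨HalfSpaces.traceMeasure ι μ', fun _ hE => HalfSpaces.traceMeasure_apply ι μ' hE,
    hν.2.1, hν.2.2, hν.unique hμ⟩
end

section
/- Let Γ be a countable group. If for every measure-preserving action of Γ on a measure space (Ω,𝓑,μ) and every S ∈ 𝓑 with μ(S △ gS) < ∞ for all g ∈ Γ one has sup_{g∈Γ} μ(S △ gS) < ∞, then every left Γ-invariant negative definite kernel on Γ is bounded (hence Γ has property (T)). -/
open MeasureTheory
open scoped symmDiff ENNReal

/-!
By Schoenberg, a negative definite kernel `f` on `X` is `‖b x - b y‖ ^ 2` for a map `b` into a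
Hilbert space, hence the variance of the increment `Z x - Z y` of a centred Gaussian process `Z`.
Adding to `Z` a constant distributed according to Lebesgue measure gives an infinite measure on
`X → ℝ` which depends only on the law of the increments of `Z`, so every self-map of `X` that
preserves `f` preserves this measure. A Lebesgue-random translation separates the signs of two real
numbers with mass equal to their distance, so the half-spaces `{w | 0 < w x}` and `{w | 0 < w y}`
differ by `E|Z x - Z y|`, a constant multiple of `√(f x y)`. When `X` is the group itself, the
half-space at `1` is thus a set whose displacement by `g` is proportional to `√(f 1 g)`.
-/

open ProbabilityTheory Filter
open scoped RealInnerProductSpace NNReal Topology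

/-- Negative definite real kernels on `X`. The points `x i` in the defining inequality are allowed
to repeat. -/
structure IsNegDefKernel {X : Type*} (f : X → X → ℝ) : Prop where
  diag (x : X) : f x x = 0
  symm (x y : X) : f x y = f y x
  sum_mul_nonpos (n : ℕ) (x : Fin n → X) (c : Fin n → ℝ) :
    ∑ i, c i = 0 → ∑ i, ∑ j, c i * c j * f (x i) (x j) ≤ 0

namespace IsNegDefKernel

variable {X : Type*} {f : X → X → ℝ}

theorem comp {Y : Type*} (hf : IsNegDefKernel f) (σ : Y → X) :
    IsNegDefKernel fun x y ↦ f (σ x) (σ y) where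
  diag _ := hf.diag _
  symm _ _ := hf.symm _ _
  sum_mul_nonpos n x := hf.sum_mul_nonpos n (σ ∘ x)

theorem sum_mul_polarization_nonneg (hf : IsNegDefKernel f) (o : X) {n : ℕ} (x : Fin n → X)
    (c : Fin n → ℝ) :
    0 ≤ ∑ i, ∑ j, c i * c j * ((f (x i) o + f (x j) o - f (x i) (x j)) / 2) := by
  set s := ∑ i, c i with hs
  set t := ∑ i, c i * f (x i) o with ht
  have hquad : ∑ i, ∑ j, c i * c j * ((f (x i) o + f (x j) o - f (x i) (x j)) / 2) =
      (t * s + s * t - ∑ i, ∑ j, c i * c j * f (x i) (x j)) / 2 := by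
    simp only [hs, ht, Finset.sum_mul_sum, ← Finset.sum_add_distrib, ← Finset.sum_sub_distrib,
      Finset.sum_div]
    exact Finset.sum_congr rfl fun i _ ↦ Finset.sum_congr rfl fun j _ ↦ by ring
  have hbalanced := hf.sum_mul_nonpos (n + 1) (Fin.cons o x) (Fin.cons (-s) c)
    (by simp [Fin.sum_univ_succ, hs])
  have hst : ∑ i, s * c i * f (x i) o = s * t := by simp only [ht, Finset.mul_sum, mul_assoc]
  simp only [Fin.sum_univ_succ, Fin.cons_zero, Fin.cons_succ, hf.diag, hf.symm o,
    Finset.sum_add_distrib, mul_neg, neg_mul, Finset.sum_neg_distrib, mul_comm _ s,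
    hst] at hbalanced
  linarith

theorem posSemidef_polarization (hf : IsNegDefKernel f) (o : X) :
    (Matrix.of fun x y ↦ (f x o + f y o - f x y) / 2).PosSemidef := by
  refine ⟨Matrix.IsHermitian.ext fun x y ↦ ?_, fun c ↦ ?_⟩
  · simp [hf.symm y x, add_comm]
  · let e := c.support.equivFin.symm
    have hsum (F : X → ℝ) : ∑ x ∈ c.support, F x = ∑ i, F (e i) := by
      rw [e.sum_comp fun x ↦ F x, Finset.sum_coe_sort]
    simpa only [Finsupp.sum, hsum, Matrix.of_apply, star_trivial, mul_right_comm] using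
      hf.sum_mul_polarization_nonneg o (fun i ↦ e i) fun i ↦ c (e i)

end IsNegDefKernel

theorem exists_inner_eq_of_posSemidef.{u} {X : Type u} {K : Matrix X X ℝ} (hK : K.PosSemidef) :
    ∃ (E : Type u) (_ : NormedAddCommGroup E) (_ : InnerProductSpace ℝ E) (_ : CompleteSpace E)
      (b : X → E), ∀ x y, ⟪b x, b y⟫ = K x y := by
  let K' : Matrix X X (ℝ →L[ℝ] ℝ) := .of fun x y ↦ K x y • ContinuousLinearMap.id ℝ ℝ
  have hsymm (x y : X) : K y x = K x y := by simpa using hK.isHermitian.apply x y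
  have hK'_iff := (RKHS.posSemidef_tfae (𝕜 := ℝ) (K := K')).out 0 2
  have : Fact K'.PosSemidef := by
    refine ⟨hK'_iff.2 ⟨Matrix.IsHermitian.ext fun x y ↦ ?_, fun c ↦ (hK.2 c).trans_eq ?_⟩⟩
    · simp [K', hsymm, ← ContinuousLinearMap.one_def]
    · simp [K', hsymm, mul_comm, mul_left_comm]
  refine ⟨RKHS.OfKernel K', inferInstance, inferInstance, inferInstance,
    fun x ↦ RKHS.kerFun (RKHS.OfKernel K') x (1 : ℝ), fun x y ↦ ?_⟩
  rw [← RKHS.kernel_inner, RKHS.OfKernel.kernel_ofKernel]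
  simp [K', hsymm x y]

theorem IsNegDefKernel.exists_norm_sub_sq_eq.{u} {X : Type u} [Nonempty X] {f : X → X → ℝ}
    (hf : IsNegDefKernel f) :
    ∃ (E : Type u) (_ : NormedAddCommGroup E) (_ : InnerProductSpace ℝ E) (_ : CompleteSpace E)
      (b : X → E), ∀ x y, ‖b x - b y‖ ^ 2 = f x y := by
  obtain ⟨o⟩ := ‹Nonempty X›
  obtain ⟨E, _, _, _, b, hb⟩ := exists_inner_eq_of_posSemidef (hf.posSemidef_polarization o)
  refine ⟨E, inferInstance, inferInstance, inferInstance, b, fun x y ↦ ?_⟩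
  rw [norm_sub_sq_real, ← real_inner_self_eq_norm_sq, ← real_inner_self_eq_norm_sq, hb, hb, hb]
  simp only [Matrix.of_apply, hf.diag]
  ring

theorem measurable_pi_coeFn_Lp {ι Ω : Type*} [MeasurableSpace Ω] {P : Measure Ω} {p : ℝ≥0∞}
    (Z : ι → Lp ℝ p P) : Measurable fun ω i ↦ Z i ω :=
  measurable_pi_lambda _ fun _ ↦ (Lp.stronglyMeasurable _).measurable

theorem coeFn_sum_smul_Lp {ι Ω : Type*} [MeasurableSpace Ω] {P : Measure Ω} {p : ℝ≥0∞}
    (s : Finset ι) (c : ι → ℝ) (e : ι → Lp ℝ p P) :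
    ⇑(∑ i ∈ s, c i • e i) =ᵐ[P] fun ω ↦ ∑ i ∈ s, c i * e i ω := by
  have hsmul : ∀ᵐ ω ∂P, ∀ i : s, (c i • e i) ω = c i * e i ω :=
    ae_all_iff.2 fun i ↦ Lp.coeFn_smul _ _
  filter_upwards [Lp.coeFn_fun_finsetSum s fun i ↦ c i • e i, hsmul] with ω hsum hsmul
  rw [hsum]
  exact Finset.sum_congr rfl fun i hi ↦ hsmul ⟨i, hi⟩

section GaussianHilbertSpace

variable {Ω : Type*} [MeasurableSpace Ω] {P : Measure Ω}

theorem hasLaw_gaussianReal_of_hasGaussianLaw {Z : Lp ℝ 2 P} (hZ : HasGaussianLaw Z P)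
    (hmean : P[Z] = 0) : HasLaw Z (gaussianReal 0 (‖Z‖₊ ^ 2)) P where
  aemeasurable := hZ.aemeasurable
  map_eq := by
    have hvar : Var[Z; P] = ‖Z‖ ^ 2 := by
      rw [variance_of_integral_eq_zero hZ.aemeasurable hmean, ← real_inner_self_eq_norm_sq,
        L2.inner_def]
      simp
    rw [hZ.map_eq_gaussianReal, hmean, hvar]
    congr 1
    ext
    simp

theorem hasLaw_sum_smul_gaussianReal {ι : Type*} {e : ι → Lp ℝ 2 P}
    (hind : iIndepFun (fun i ↦ ⇑(e i)) P) (hlaw : ∀ i, HasLaw (e i) (gaussianReal 0 1) P)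
    (s : Finset ι) (c : ι → ℝ) :
    HasLaw (∑ i ∈ s, c i • e i : Lp ℝ 2 P) (gaussianReal 0 (‖∑ i ∈ s, c i • e i‖₊ ^ 2)) P := by
  have hcoe : ⇑(∑ i ∈ s, c i • e i) =ᵐ[P] fun ω ↦ ∑ i : s, c i * e i ω := by
    simpa only [← Finset.sum_coe_sort s] using coeFn_sum_smul_Lp s c e
  have hind' : iIndepFun (fun (i : s) ω ↦ c i * e i ω) P :=
    (hind.precomp Subtype.val_injective).comp (fun (i : s) x ↦ c i * x) fun _ ↦ by fun_prop
  have hgauss : HasGaussianLaw (fun ω ↦ ∑ i : s, c i * e i ω) P :=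
    hind'.hasGaussianLaw_fun_sum fun i ↦ (hlaw i).hasGaussianLaw.fun_smul _
  refine hasLaw_gaussianReal_of_hasGaussianLaw (hgauss.congr hcoe.symm) ?_
  rw [integral_congr_ae hcoe, integral_finsetSum _ fun (i : s) _ ↦
    (hlaw i).hasGaussianLaw.integrable.const_mul (c i)]
  simp [integral_const_mul, (hlaw _).integral_eq]

variable [IsProbabilityMeasure P]

theorem continuous_charFun_map_Lp (t : ℝ) :
    Continuous fun Z : Lp ℝ 2 P ↦ charFun (P.map Z) t := by
  refine continuous_iff_continuousAt.2 fun Z ↦ ?_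
  have hdist : TendstoInDistribution (fun Y : Lp ℝ 2 P ↦ ⇑Y) (𝓝 Z) Z (fun _ ↦ P) P :=
    (tendstoInMeasure_of_tendsto_Lp tendsto_id).tendstoInDistribution fun Y ↦
      (Lp.aestronglyMeasurable Y).aemeasurable
  simp only [ContinuousAt, charFun_eq_integral_innerProbChar]
  exact (ProbabilityMeasure.tendsto_iff_forall_integral_rclike_tendsto ℂ).1 hdist.tendsto
    (BoundedContinuousFunction.innerProbChar t)

theorem isClosed_setOf_hasLaw_gaussianReal :
    IsClosed {Z : Lp ℝ 2 P | HasLaw Z (gaussianReal 0 (‖Z‖₊ ^ 2)) P} := by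
  have hcharFun : {Z : Lp ℝ 2 P | HasLaw Z (gaussianReal 0 (‖Z‖₊ ^ 2)) P} =
      ⋂ t : ℝ, {Z : Lp ℝ 2 P | charFun (P.map Z) t = Complex.exp (-(‖Z‖ ^ 2 * t ^ 2 / 2))} := by
    ext Z
    have hcharFun_gaussian (t : ℝ) : charFun (gaussianReal 0 (‖Z‖₊ ^ 2)) t =
        Complex.exp (-(‖Z‖ ^ 2 * t ^ 2 / 2)) := by
      simp [charFun_gaussianReal]
    simp only [Set.mem_iInter, Set.mem_ofPred_eq, ← hcharFun_gaussian]
    exact ⟨fun h t ↦ by rw [h.map_eq],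
      fun h ↦ ⟨(Lp.aestronglyMeasurable Z).aemeasurable, Measure.ext_of_charFun (funext h)⟩⟩
  rw [hcharFun]
  exact isClosed_iInter fun t ↦ isClosed_eq (continuous_charFun_map_Lp t) (by fun_prop)

theorem orthonormal_of_iIndepFun_gaussianReal {ι : Type*} {e : ι → Lp ℝ 2 P}
    (hind : iIndepFun (fun i ↦ ⇑(e i)) P) (hlaw : ∀ i, HasLaw (e i) (gaussianReal 0 1) P) :
    Orthonormal ℝ e := by
  have hmean (i : ι) : P[e i] = 0 := by simp [(hlaw i).integral_eq]
  have hinner (i j : ι) : ⟪e i, e j⟫ = cov[e i, e j; P] := by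
    rw [covariance_eq_sub (Lp.memLp _) (Lp.memLp _), hmean, zero_mul, sub_zero, L2.inner_def]
    simp [mul_comm]
  refine ⟨fun i ↦ ?_, fun i j hij ↦ ?_⟩
  · rw [← pow_eq_one_iff_of_nonneg (norm_nonneg _) two_ne_zero, ← real_inner_self_eq_norm_sq,
      hinner, covariance_self (hlaw i).aemeasurable, (hlaw i).variance_eq, variance_id_gaussianReal,
      NNReal.coe_one]
  · exact (hinner i j).trans ((hind.indepFun hij).covariance_eq_zero (Lp.memLp _) (Lp.memLp _))

end GaussianHilbertSpace

/-- An isonormal Gaussian process indexed by `E`: a linear map into `L²` sending `h` to a centred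
Gaussian variable of variance `‖h‖ ^ 2`. Joint Gaussianity is encoded by linearity. -/
def IsIsonormal {E Ω : Type*} [NormedAddCommGroup E] [Module ℝ E] [MeasurableSpace Ω]
    {P : Measure Ω} (W : E →ₗ[ℝ] Lp ℝ 2 P) : Prop :=
  ∀ h, HasLaw (W h) (gaussianReal 0 (‖h‖₊ ^ 2)) P

theorem exists_isIsonormal.{u} (E : Type u) [NormedAddCommGroup E] [InnerProductSpace ℝ E]
    [CompleteSpace E] :
    ∃ (Ω : Type u) (_ : MeasurableSpace Ω) (P : Measure Ω) (_ : IsProbabilityMeasure P)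
      (W : E →ₗ[ℝ] Lp ℝ 2 P), IsIsonormal W := by
  obtain ⟨s, b, -⟩ := exists_hilbertBasis ℝ E
  obtain ⟨Ω, _, P, X, -, hX, hX_indep, _⟩ := exists_iid s (gaussianReal 0 1)
  have hmemLp (i : s) : MemLp (X i) 2 P := (hX i).hasGaussianLaw.memLp_two
  let e : s → Lp ℝ 2 P := fun i ↦ (hmemLp i).toLp
  have he (i : s) : e i =ᵐ[P] X i := (hmemLp i).coeFn_toLp
  have hind : iIndepFun (fun i ↦ ⇑(e i)) P := hX_indep.congr fun i ↦ (he i).symm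
  have hlaw (i : s) : HasLaw (e i) (gaussianReal 0 1) P := (hX i).congr (he i)
  have horth := orthonormal_of_iIndepFun_gaussianReal hind hlaw
  let W : E →ₗᵢ[ℝ] Lp ℝ 2 P :=
    horth.orthogonalFamily.linearIsometry.comp b.repr.toLinearIsometry
  refine ⟨Ω, _, P, inferInstance, W.toLinearMap, fun h ↦ ?_⟩
  rw [← W.nnnorm_map]
  exact isClosed_setOf_hasLaw_gaussianReal.mem_of_tendsto
    (horth.orthogonalFamily.hasSum_linearIsometry (b.repr h))
    (.of_forall fun t ↦ hasLaw_sum_smul_gaussianReal hind hlaw t (b.repr h))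

theorem measure_pi_eq_of_forall_map_sum_mul_eq {ι : Type*} {μ ν : Measure (ι → ℝ)}
    [IsFiniteMeasure μ] [IsFiniteMeasure ν]
    (h : ∀ (I : Finset ι) (c : ι → ℝ),
      μ.map (fun w ↦ ∑ i ∈ I, c i * w i) = ν.map fun w ↦ ∑ i ∈ I, c i * w i) : μ = ν := by
  classical
  have hmarginal (I : Finset ι) : μ.map I.restrict = ν.map I.restrict := by
    refine Measure.ext_of_charFunDual (funext fun L ↦ ?_)
    have hL : L ∘ I.restrict =
        fun w : ι → ℝ ↦ ∑ i ∈ I, L (I.restrict (Pi.single (M := fun _ ↦ ℝ) i 1)) * w i := by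
      ext w
      have hw : I.restrict w = ∑ i ∈ I, w i • I.restrict (Pi.single (M := fun _ ↦ ℝ) i 1) := by
        ext j
        simp [Pi.single_apply]
      simp [hw, mul_comm]
    rw [charFunDual_eq_charFun_map_one, charFunDual_eq_charFun_map_one,
      Measure.map_map (by fun_prop) (by fun_prop), Measure.map_map (by fun_prop) (by fun_prop),
      hL, h]
  exact IsProjectiveLimit.unique (P := fun I ↦ ν.map I.restrict) hmarginal fun _ ↦ rfl

theorem norm_sum_smul_sub_eq_of_norm_sub_eq {ι E F : Type*} [NormedAddCommGroup E]
    [InnerProductSpace ℝ E] [NormedAddCommGroup F] [InnerProductSpace ℝ F] {u : ι → E} {v : ι → F}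
    (huv : ∀ i j, ‖u i - u j‖ = ‖v i - v j‖) (o : ι) (s : Finset ι) (c : ι → ℝ) :
    ‖∑ i ∈ s, c i • (u i - u o)‖ = ‖∑ i ∈ s, c i • (v i - v o)‖ := by
  have hinner (i j : ι) : ⟪u i - u o, u j - u o⟫ = ⟪v i - v o, v j - v o⟫ := by
    simp only [real_inner_eq_norm_mul_self_add_norm_mul_self_sub_norm_sub_mul_self_div_two,
      sub_sub_sub_cancel_right, huv]
  rw [← sq_eq_sq₀ (norm_nonneg _) (norm_nonneg _), ← real_inner_self_eq_norm_sq,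
    ← real_inner_self_eq_norm_sq]
  simp only [sum_inner, inner_sum, real_inner_smul_left, real_inner_smul_right, hinner]

/-- The image of `ν ⊗ Lebesgue` under `(w, t) ↦ w + t`: if `ν` is the law of a process, this is the
law of the process shifted by an independent constant distributed according to Lebesgue measure. It
depends only on the increments of the process. -/
noncomputable def smearConst {ι : Type*} (ν : Measure (ι → ℝ)) : Measure (ι → ℝ) :=
  (ν.prod volume).map fun p i ↦ p.1 i + p.2

/-- The functions that are positive at `x`. They play the role of the paper's sets
`S⁰_x = {c : c x = 1}`, a function `w` inducing the configuration `c = 𝟙 {w > 0}`. -/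
def halfSpace {X : Type*} (x : X) : Set (X → ℝ) := {w | 0 < w x}

theorem measurableSet_halfSpace {X : Type*} (x : X) : MeasurableSet (halfSpace x) :=
  measurableSet_lt measurable_const (measurable_pi_apply x)

theorem volume_pos_add_symmDiff_pos_add (u v : ℝ) :
    volume ({t : ℝ | 0 < u + t} ∆ {t : ℝ | 0 < v + t}) = ‖u - v‖ₑ := by
  wlog huv : u ≤ v generalizing u v
  · rw [symmDiff_comm, enorm_sub_rev, this v u (le_of_not_ge huv)]
  have hIoc : {t : ℝ | 0 < u + t} ∆ {t : ℝ | 0 < v + t} = Set.Ioc (-v) (-u) := by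
    ext t
    grind
  rw [hIoc, Real.volume_Ioc, neg_sub_neg, enorm_sub_rev, Real.enorm_of_nonneg (sub_nonneg.2 huv)]

section SmearConst

variable {ι : Type*} (ν : Measure (ι → ℝ))

theorem smearConst_map_comp {κ : Type*} [SFinite ν] (σ : κ → ι) :
    smearConst (ν.map fun w ↦ w ∘ σ) = (smearConst ν).map fun w ↦ w ∘ σ := by
  have hσ : Measurable fun w : ι → ℝ ↦ w ∘ σ := by fun_prop
  have hprod : (ν.map fun w ↦ w ∘ σ).prod volume =
      (ν.prod volume).map (Prod.map (fun w ↦ w ∘ σ) (id : ℝ → ℝ)) := by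
    rw [← Measure.map_prod_map _ _ hσ measurable_id, Measure.map_id]
  rw [smearConst, smearConst, hprod, Measure.map_map (by fun_prop) (by fun_prop),
    Measure.map_map (by fun_prop) (by fun_prop)]
  rfl

theorem smearConst_map_sub [SFinite ν] {φ : (ι → ℝ) → ℝ} (hφ : Measurable φ) :
    smearConst (ν.map fun w i ↦ w i - φ w) = smearConst ν := by
  have hshear : MeasurePreserving (fun p : (ι → ℝ) × ℝ ↦ (fun i ↦ p.1 i - φ p.1, φ p.1 + p.2))
      (ν.prod volume) ((ν.map fun w i ↦ w i - φ w).prod volume) :=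
    MeasurePreserving.skew_product (f := fun (w : ι → ℝ) i ↦ w i - φ w) (g := fun w t ↦ φ w + t)
      ⟨by fun_prop, rfl⟩ (by fun_prop) (.of_forall fun w ↦ map_add_left_eq_self volume (φ w))
  rw [smearConst, ← hshear.map_eq, Measure.map_map (by fun_prop) (by fun_prop), smearConst]
  congr with p i
  simp only [Function.comp_apply]
  ring

theorem smearConst_halfSpace_symmDiff (x y : ι) :
    smearConst ν (halfSpace x ∆ halfSpace y) = ∫⁻ w, ‖w x - w y‖ₑ ∂ν := by
  have hS := (measurableSet_halfSpace x).symmDiff (measurableSet_halfSpace y)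
  have hadd : Measurable fun (p : (ι → ℝ) × ℝ) i ↦ p.1 i + p.2 := by fun_prop
  rw [smearConst, Measure.map_apply hadd hS, Measure.prod_apply (hadd hS)]
  exact lintegral_congr fun w ↦ volume_pos_add_symmDiff_pos_add _ _

end SmearConst

theorem lintegral_enorm_gaussianReal (s : ℝ≥0) :
    ∫⁻ z, ‖z‖ₑ ∂gaussianReal 0 (s ^ 2) = s * ∫⁻ z, ‖z‖ₑ ∂gaussianReal 0 1 := by
  have hscale : (gaussianReal 0 1).map ((s : ℝ) * ·) = gaussianReal 0 (s ^ 2) := by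
    rw [gaussianReal_map_const_mul, mul_zero, mul_one]
    rfl
  rw [← hscale, lintegral_map (by fun_prop) (by fun_prop), ← lintegral_const_mul _ (by fun_prop)]
  simp [enorm_mul]

theorem lintegral_enorm_gaussianReal_ne_top (m : ℝ) (v : ℝ≥0) :
    ∫⁻ z, ‖z‖ₑ ∂gaussianReal m v ≠ ∞ :=
  ((memLp_id_gaussianReal 1).integrable le_rfl).2.ne

theorem lintegral_enorm_gaussianReal_ne_zero (m : ℝ) {v : ℝ≥0} (hv : v ≠ 0) :
    ∫⁻ z, ‖z‖ₑ ∂gaussianReal m v ≠ 0 := by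
  have := nullSingletonClass_gaussianReal (μ := m) hv
  intro h
  have hzero : ∀ᵐ z ∂gaussianReal m v, z = 0 := by
    simpa [EventuallyEq] using (lintegral_eq_zero_iff measurable_enorm).1 h
  obtain ⟨z, hz, hz0⟩ := (hzero.and (Measure.ae_ne _ 0)).exists
  exact hz0 hz

namespace IsIsonormal

variable {ι E Ω : Type*} [NormedAddCommGroup E] [InnerProductSpace ℝ E] [MeasurableSpace Ω]
  {P : Measure Ω} {W : E →ₗ[ℝ] Lp ℝ 2 P}

theorem hasLaw_sum_mul_sub (hW : IsIsonormal W) (u : ι → E) (o : ι) (s : Finset ι) (c : ι → ℝ) :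
    HasLaw (fun ω ↦ ∑ i ∈ s, c i * (W (u i) ω - W (u o) ω))
      (gaussianReal 0 (‖∑ i ∈ s, c i • (u i - u o)‖₊ ^ 2)) P := by
  refine (hW _).congr ?_
  have hsub : ∀ᵐ ω ∂P, ∀ i : s, W (u i - u o) ω = W (u i) ω - W (u o) ω :=
    ae_all_iff.2 fun i ↦ by rw [map_sub]; exact Lp.coeFn_sub _ _
  simp only [map_sum, map_smul]
  filter_upwards [coeFn_sum_smul_Lp s c fun i ↦ W (u i - u o), hsub] with ω hsum hsub
  rw [hsum]
  exact Finset.sum_congr rfl fun i hi ↦ by rw [hsub ⟨i, hi⟩]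

theorem map_sub_eq_of_norm_sub_eq [IsFiniteMeasure P] (hW : IsIsonormal W) {u v : ι → E}
    (huv : ∀ i j, ‖u i - u j‖ = ‖v i - v j‖) (o : ι) :
    P.map (fun ω i ↦ W (u i) ω - W (u o) ω) = P.map fun ω i ↦ W (v i) ω - W (v o) ω := by
  have hmeas (z : ι → E) : Measurable fun ω i ↦ W (z i) ω - W (z o) ω := by
    have := measurable_pi_coeFn_Lp fun i ↦ W (z i)
    fun_prop
  refine measure_pi_eq_of_forall_map_sum_mul_eq fun I c ↦ ?_
  have hnorm : ‖∑ i ∈ I, c i • (u i - u o)‖₊ = ‖∑ i ∈ I, c i • (v i - v o)‖₊ :=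
    NNReal.eq (norm_sum_smul_sub_eq_of_norm_sub_eq huv o I c)
  have hu := (hW.hasLaw_sum_mul_sub u o I c).map_eq
  have hv := (hW.hasLaw_sum_mul_sub v o I c).map_eq
  rw [Measure.map_map (by fun_prop) (hmeas u), Measure.map_map (by fun_prop) (hmeas v)]
  exact hu.trans (hnorm ▸ hv.symm)

theorem smearConst_map_eq_of_norm_sub_eq [Nonempty ι] [IsFiniteMeasure P] (hW : IsIsonormal W)
    {u v : ι → E} (huv : ∀ i j, ‖u i - u j‖ = ‖v i - v j‖) :
    smearConst (P.map fun ω i ↦ W (u i) ω) = smearConst (P.map fun ω i ↦ W (v i) ω) := by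
  obtain ⟨o⟩ := ‹Nonempty ι›
  have hincr (z : ι → E) : smearConst (P.map fun ω i ↦ W (z i) ω) =
      smearConst (P.map fun ω i ↦ W (z i) ω - W (z o) ω) := by
    rw [← smearConst_map_sub _ (measurable_pi_apply o),
      Measure.map_map (by fun_prop) (measurable_pi_coeFn_Lp fun i ↦ W (z i))]
    rfl
  rw [hincr, hincr, hW.map_sub_eq_of_norm_sub_eq huv]

theorem smearConst_map_halfSpace_symmDiff (hW : IsIsonormal W) (u : ι → E) (x y : ι) :
    smearConst (P.map fun ω i ↦ W (u i) ω) (halfSpace x ∆ halfSpace y) =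
      ‖u x - u y‖ₑ * ∫⁻ z, ‖z‖ₑ ∂gaussianReal 0 1 := by
  rw [smearConst_halfSpace_symmDiff,
    lintegral_map (by fun_prop) (measurable_pi_coeFn_Lp fun i ↦ W (u i))]
  have hsub := Lp.coeFn_sub (W (u x)) (W (u y))
  calc
    ∫⁻ ω, ‖W (u x) ω - W (u y) ω‖ₑ ∂P = ∫⁻ ω, ‖W (u x - u y) ω‖ₑ ∂P := by
      rw [map_sub]
      exact lintegral_congr_ae <| hsub.mono fun ω hω ↦ by simp only [hω, Pi.sub_apply]
    _ = ∫⁻ z, ‖z‖ₑ ∂gaussianReal 0 (‖u x - u y‖₊ ^ 2) :=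
      (hW _).lintegral_comp (f := fun z ↦ ‖z‖ₑ) (by fun_prop)
    _ = ‖u x - u y‖ₑ * ∫⁻ z, ‖z‖ₑ ∂gaussianReal 0 1 := lintegral_enorm_gaussianReal _

end IsIsonormal

theorem IsNegDefKernel.exists_measure_halfSpace_symmDiff {X : Type*} [Nonempty X]
    {f : X → X → ℝ} (hf : IsNegDefKernel f) :
    ∃ μ : Measure (X → ℝ),
      (∀ x y, μ (halfSpace x ∆ halfSpace y) = ENNReal.ofReal √(f x y)) ∧
      ∀ σ : X → X, (∀ x y, f (σ x) (σ y) = f x y) → MeasurePreserving (· ∘ σ) μ μ := by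
  obtain ⟨E, _, _, _, b, hb⟩ := hf.exists_norm_sub_sq_eq
  obtain ⟨Ω, _, P, _, W, hW⟩ := exists_isIsonormal E
  let M := ∫⁻ z, ‖z‖ₑ ∂gaussianReal 0 1
  have hM₀ : M ≠ 0 := lintegral_enorm_gaussianReal_ne_zero 0 one_ne_zero
  have hM : M ≠ ∞ := lintegral_enorm_gaussianReal_ne_top 0 1
  refine ⟨M⁻¹ • smearConst (P.map fun ω x ↦ W (b x) ω), fun x y ↦ ?_, fun σ hσ ↦ ?_⟩
  · rw [Measure.smul_apply, hW.smearConst_map_halfSpace_symmDiff, smul_eq_mul, mul_comm,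
      mul_assoc, ENNReal.mul_inv_cancel hM₀ hM, mul_one, ← hb, Real.sqrt_sq (norm_nonneg _),
      ofReal_norm]
  · have hnorm (x y : X) : ‖b (σ x) - b (σ y)‖ = ‖b x - b y‖ := by
      rw [← sq_eq_sq₀ (norm_nonneg _) (norm_nonneg _), hb, hb, hσ]
    refine MeasurePreserving.smul_measure ⟨by fun_prop, ?_⟩ _
    rw [← smearConst_map_comp,
      Measure.map_map (by fun_prop) (measurable_pi_coeFn_Lp fun x ↦ W (b x))]
    exact hW.smearConst_map_eq_of_norm_sub_eq (u := b ∘ σ) hnorm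

/-- The hypothesis on `Γ` in terms of measure-preserving actions, on spaces in universe `w`: the
displacements `μ (S ∆ gS)` of a measurable set are bounded as soon as they are all finite. The
action is given as a family of maps `a g : Ω → Ω`. -/
def HasBoundedDisplacements.{w} (Γ : Type*) [Group Γ] : Prop :=
  ∀ (Ω : Type w) (_ : MeasurableSpace Ω) (μ : Measure Ω) (a : Γ → Ω → Ω),
    (∀ ω, a 1 ω = ω) →
    (∀ g h ω, a (g * h) ω = a g (a h ω)) →
    (∀ g, MeasurePreserving (a g) μ μ) →
    ∀ S : Set Ω, MeasurableSet S →
    (∀ g, μ (S ∆ (a g '' S)) ≠ ⊤) →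
    ∃ C : ℝ≥0∞, C ≠ ⊤ ∧ ∀ g, μ (S ∆ (a g '' S)) ≤ C

theorem image_halfSpace {X : Type*} (σ : Equiv.Perm X) (x : X) :
    (fun w : X → ℝ ↦ w ∘ σ.symm) '' halfSpace x = halfSpace (σ x) := by
  ext w
  refine ⟨?_, fun hw ↦ ⟨w ∘ σ, hw, ?_⟩⟩
  · rintro ⟨w, hw, rfl⟩
    simpa [halfSpace] using hw
  · simp [Function.comp_assoc]

theorem IsNegDefKernel.exists_forall_smul_le.{w} {Γ : Type*} [Group Γ]
    (hΓ : HasBoundedDisplacements.{w} Γ) {X : Type w} [MulAction Γ X] {f : X → X → ℝ}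
    (hf : IsNegDefKernel f) (hinv : ∀ (g : Γ) x y, f (g • x) (g • y) = f x y) (x : X) :
    ∃ C : ℝ, ∀ g : Γ, f x (g • x) ≤ C := by
  have : Nonempty X := ⟨x⟩
  obtain ⟨μ, hμ, hμ_inv⟩ := hf.exists_measure_halfSpace_symmDiff
  let a (g : Γ) (w : X → ℝ) : X → ℝ := w ∘ (g⁻¹ • ·)
  have ha (g : Γ) : a g '' halfSpace x = halfSpace (g • x) := image_halfSpace (MulAction.toPerm g) x
  obtain ⟨C, hC, hle⟩ := hΓ (X → ℝ) _ μ a (fun w ↦ by ext; simp [a])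
    (fun g h w ↦ by ext; simp [a, mul_smul]) (fun g ↦ hμ_inv _ (hinv g⁻¹)) (halfSpace x)
    (measurableSet_halfSpace x) fun g ↦ by rw [ha, hμ]; exact ENNReal.ofReal_ne_top
  simp only [ha, hμ, ENNReal.ofReal_le_iff_le_toReal hC] at hle
  exact ⟨C.toReal ^ 2, fun g ↦ (Real.sqrt_le_left ENNReal.toReal_nonneg).1 (hle g)⟩

theorem uniform_bound_implies_invariant_negdef_kernels_bounded_general.{w} (Γ : Type*) [Group Γ]
    [Small.{w} Γ] (hΓ : HasBoundedDisplacements.{w} Γ) {f : Γ → Γ → ℝ} (hf : IsNegDefKernel f)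
    (hinv : ∀ g x y, f (g * x) (g * y) = f x y) : ∃ C : ℝ, ∀ x y, f x y ≤ C := by
  obtain ⟨C, hC⟩ := (hf.comp (equivShrink.{w} Γ).symm).exists_forall_smul_le hΓ
    (fun g x y ↦ by simp [hinv]) (equivShrink Γ 1)
  refine ⟨C, fun x y ↦ ?_⟩
  simpa [← equivShrink_smul, ← hinv x⁻¹ x y] using hC (x⁻¹ * y)

/-- If for every measure-preserving action of the countable group `Γ` and
every set `S` with `μ(S ∆ gS) < ∞` for all `g` the quantities `μ(S ∆ gS)` are uniformly
bounded, then every left `Γ`-invariant negative definite kernel on `Γ` is bounded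
(hence `Γ` has property (T)). -/
theorem uniform_bound_implies_invariant_negdef_kernels_bounded
    (Γ : Type*) [Group Γ] [Countable Γ]
    (hdyn : ∀ (Ω : Type) (_ : MeasurableSpace Ω) (μ : Measure Ω) (a : Γ → Ω → Ω),
      (∀ ω, a 1 ω = ω) →
      (∀ g h ω, a (g * h) ω = a g (a h ω)) →
      (∀ g, MeasurePreserving (a g) μ μ) →
      ∀ S : Set Ω, MeasurableSet S →
      (∀ g, μ (S ∆ (a g '' S)) ≠ ⊤) →
      ∃ C : ℝ≥0∞, C ≠ ⊤ ∧ ∀ g, μ (S ∆ (a g '' S)) ≤ C) :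
    ∀ f : Γ → Γ → ℝ,
      (∀ x y, 0 ≤ f x y) →
      (∀ g x y, f (g * x) (g * y) = f x y) →
      (∀ x, f x x = 0) →
      (∀ x y, f x y = f y x) →
      (∀ (n : ℕ) (x : Fin n → Γ) (c : Fin n → ℝ), (∑ i, c i = 0) →
        ∑ i, ∑ j, c i * c j * f (x i) (x j) ≤ 0) →
      ∃ C : ℝ, ∀ x y, f x y ≤ C := by
  intro f _ hinv hdiag hsymm hneg
  exact uniform_bound_implies_invariant_negdef_kernels_bounded_general Γ hdyn
    ⟨hdiag, hsymm, hneg⟩ hinv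
end
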